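/- Let 𝒰 ⊆ B(K₁,L₁) and 𝒱 ⊆ B(H₂,K₂) be ternary rings of operators, and let φ : 𝒰 → B(K,L) and ψ : 𝒱 → B(H,K) be ternary morphisms that semi-commute. Then for every p ∈ ℕ and all elements u_{i,j} ∈ 𝒰 and v_{i,j} ∈ 𝒱 (i ∈ {1,2,3}, j ∈ {1,…,p}), one has Σ_{j,k,l=1}^p φ(u_{1,j} u_{2,k}* u_{3,l}) ψ(v_{1,j} v_{2,k}* v_{3,l}) = (Σ_{j=1}^p φ(u_{1,j})ψ(v_{1,j})) (Σ_{k=1}^p φ(u_{2,k})ψ(v_{2,k}))* (Σ_{l=1}^p φ(u_{3,l})ψ(v_{3,l})). In particular, the map u ⊗ v ↦ φ(u)ψ(v) on the algebraic tensor product 𝒰 ⊗ 𝒱 is a ternary morphism with respect to the entrywise triple product. -/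

import Mathlib

open ContinuousLinearMap

/-- A linear map `φ` on a TRO `𝒰 ⊆ B(K₀, L₀)` is a ternary morphism if it
satisfies `φ(S T* R) = φ(S) φ(T)* φ(R)` for all `S, T, R ∈ 𝒰`. -/
def IsTernaryHom
    {K₀ L₀ K L : Type*}
    [NormedAddCommGroup K₀] [InnerProductSpace ℂ K₀] [CompleteSpace K₀]
    [NormedAddCommGroup L₀] [InnerProductSpace ℂ L₀] [CompleteSpace L₀]
    [NormedAddCommGroup K] [InnerProductSpace ℂ K] [CompleteSpace K]
    [NormedAddCommGroup L] [InnerProductSpace ℂ L] [CompleteSpace L]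
    (𝒰 : Submodule ℂ (K₀ →L[ℂ] L₀)) (φ : ↥𝒰 →ₗ[ℂ] (K →L[ℂ] L)) : Prop :=
  ∀ (s t r : 𝒰)
    (h : (s : K₀ →L[ℂ] L₀) ∘L (adjoint (t : K₀ →L[ℂ] L₀)) ∘L (r : K₀ →L[ℂ] L₀) ∈ 𝒰),
    φ ⟨(s : K₀ →L[ℂ] L₀) ∘L (adjoint (t : K₀ →L[ℂ] L₀)) ∘L (r : K₀ →L[ℂ] L₀), h⟩
      = φ s ∘L (adjoint (φ t)) ∘L φ r

/-- For semi-commuting ternary morphisms `φ`, `ψ` of TROs `𝒰`, `𝒱`,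
the product `u ⊗ v ↦ φ(u)ψ(v)` is a ternary morphism of the tensor product:
the triple-sum identity holds. -/
theorem statement2
    {K₁ L₁ H₂ K₂ H K L : Type*}
    [NormedAddCommGroup K₁] [InnerProductSpace ℂ K₁] [CompleteSpace K₁]
    [NormedAddCommGroup L₁] [InnerProductSpace ℂ L₁] [CompleteSpace L₁]
    [NormedAddCommGroup H₂] [InnerProductSpace ℂ H₂] [CompleteSpace H₂]
    [NormedAddCommGroup K₂] [InnerProductSpace ℂ K₂] [CompleteSpace K₂]
    [NormedAddCommGroup H] [InnerProductSpace ℂ H] [CompleteSpace H]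
    [NormedAddCommGroup K] [InnerProductSpace ℂ K] [CompleteSpace K]
    [NormedAddCommGroup L] [InnerProductSpace ℂ L] [CompleteSpace L]
    (𝒰 : Submodule ℂ (K₁ →L[ℂ] L₁)) (𝒱 : Submodule ℂ (H₂ →L[ℂ] K₂))
    (h𝒰closed : IsClosed (𝒰 : Set (K₁ →L[ℂ] L₁)))
    (h𝒱closed : IsClosed (𝒱 : Set (H₂ →L[ℂ] K₂)))
    (h𝒰tro : ∀ S ∈ 𝒰, ∀ T ∈ 𝒰, ∀ R ∈ 𝒰, S ∘L (adjoint T) ∘L R ∈ 𝒰)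
    (h𝒱tro : ∀ S ∈ 𝒱, ∀ T ∈ 𝒱, ∀ R ∈ 𝒱, S ∘L (adjoint T) ∘L R ∈ 𝒱)
    (φ : ↥𝒰 →ₗ[ℂ] (K →L[ℂ] L)) (ψ : ↥𝒱 →ₗ[ℂ] (H →L[ℂ] K))
    (hφ : IsTernaryHom 𝒰 φ) (hψ : IsTernaryHom 𝒱 ψ)
    (hsemi : ∀ (u₁ u₂ : 𝒰) (v₁ v₂ : 𝒱),
      Commute ((adjoint (φ u₁)) ∘L (φ u₂)) ((ψ v₁) ∘L (adjoint (ψ v₂))))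
    (p : ℕ) (u₁ u₂ u₃ : Fin p → 𝒰) (v₁ v₂ v₃ : Fin p → 𝒱) :
    ∑ j, ∑ k, ∑ l,
        (φ ⟨((u₁ j : K₁ →L[ℂ] L₁)) ∘L (adjoint (u₂ k : K₁ →L[ℂ] L₁)) ∘L
              ((u₃ l : K₁ →L[ℂ] L₁)),
            h𝒰tro _ (u₁ j).2 _ (u₂ k).2 _ (u₃ l).2⟩) ∘L
          (ψ ⟨((v₁ j : H₂ →L[ℂ] K₂)) ∘L (adjoint (v₂ k : H₂ →L[ℂ] K₂)) ∘L
              ((v₃ l : H₂ →L[ℂ] K₂)),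
            h𝒱tro _ (v₁ j).2 _ (v₂ k).2 _ (v₃ l).2⟩)
      = (∑ j, (φ (u₁ j)) ∘L (ψ (v₁ j))) ∘L
          (adjoint (∑ k, (φ (u₂ k)) ∘L (ψ (v₂ k)))) ∘L
          (∑ l, (φ (u₃ l)) ∘L (ψ (v₃ l))) := by
  have key : ∀ j k l, (φ (u₁ j) ∘L adjoint (φ (u₂ k)) ∘L φ (u₃ l)) ∘L
      (ψ (v₁ j) ∘L adjoint (ψ (v₂ k)) ∘L ψ (v₃ l))
      = (φ (u₁ j) ∘L ψ (v₁ j)) ∘L adjoint (φ (u₂ k) ∘L ψ (v₂ k)) ∘L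
        (φ (u₃ l) ∘L ψ (v₃ l)) := by
    intro j k l
    have h := (hsemi (u₂ k) (u₃ l) (v₁ j) (v₂ k)).eq
    rw [adjoint_comp]
    ext x
    have hx := congrArg (fun T : K →L[ℂ] K => φ (u₁ j) (T (ψ (v₃ l) x))) h
    exact hx
  have e : ∀ j k l, _ = _ := fun j k l => congrArg₂ (fun (A : K →L[ℂ] L) (B : H →L[ℂ] K) => A ∘L B)
    (hφ (u₁ j) (u₂ k) (u₃ l) (h𝒰tro _ (u₁ j).2 _ (u₂ k).2 _ (u₃ l).2))
    (hψ (v₁ j) (v₂ k) (v₃ l) (h𝒱tro _ (v₁ j).2 _ (v₂ k).2 _ (v₃ l).2))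
  refine (Finset.sum_congr rfl fun j _ => Finset.sum_congr rfl fun k _ =>
    Finset.sum_congr rfl fun l _ => (e j k l).trans (key j k l)).trans ?_
  ext x
  simp only [map_sum, sum_apply, comp_apply]
  rw [Finset.sum_comm]
  refine Eq.trans ?_ Finset.sum_comm
  refine Finset.sum_congr rfl fun k _ => ?_
  rw [Finset.sum_comm]
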